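/- Let α > −1 and β > −1 be real numbers and define τ_k := Γ(β+1)·(2k+α+β+1)·Γ(k+α+1)·Γ(k+α+β+1)/(Γ(α+1)·Γ(α+β+2)·Γ(k+1)·Γ(k+β+1)) for k = 0, 1, 2, …. Then the ratio (∑_{k=0}^{m} τ_k) / ( (Γ(β+1)/(Γ(α+2)·Γ(α+β+2))) · m^{2α+2} ) tends to 1 as m → ∞. -/

import Mathlib

open Real Filter Finset

open Asymptotics
open scoped Nat Topology

/-!
The sums of the multiplicities `τ_k` telescope: up to a constant, `∑_{k ≤ m} τ_k` equals
`Γ(β+1) / (Γ(α+2) Γ(α+β+2))` times the product of the two Gamma quotients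
`Γ(m+α+2) / Γ(m+1)` and `Γ(m+α+β+2) / Γ(m+β+1)`. Both of them have arguments differing by `α + 1`,
so Euler's limit formula makes each asymptotic to `m ^ (α + 1)`.
-/

theorem ne_neg_natCast_of_pos {s : ℝ} (hs : 0 < s) (k : ℕ) : s ≠ -k :=
  ((neg_nonpos.mpr k.cast_nonneg).trans_lt hs).ne'

theorem add_natCast_ne_zero {s : ℝ} (hs : ∀ k : ℕ, s ≠ -k) (k : ℕ) : s + k ≠ 0 :=
  fun h => hs k (eq_neg_of_add_eq_zero_left h)

theorem Gamma_add_natCast_eq_mul_prod {s : ℝ} (hs : ∀ k : ℕ, s ≠ -k) (n : ℕ) :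
    Gamma (s + n) = Gamma s * ∏ j ∈ range n, (s + j) := by
  induction n with
  | zero => simp
  | succ n ih =>
    rw [Nat.cast_add_one, ← add_assoc, Gamma_add_one (add_natCast_ne_zero hs n), ih,
      prod_range_succ]
    ring

theorem GammaSeq_mul_Gamma_add_natCast {s : ℝ} (hs : ∀ k : ℕ, s ≠ -k) (n : ℕ) :
    GammaSeq s n * Gamma (s + (n + 1 : ℕ)) = Gamma s * (n ! * (n : ℝ) ^ s) := by
  have hprod : ∏ j ∈ range (n + 1), (s + j) ≠ 0 :=
    prod_ne_zero_iff.mpr fun j _ => add_natCast_ne_zero hs j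
  rw [Gamma_add_natCast_eq_mul_prod hs, GammaSeq]
  field_simp

theorem Gamma_natCast_add_add_one_isEquivalent_of_ne {s : ℝ} (hs : ∀ k : ℕ, s ≠ -k) :
    (fun n : ℕ => Gamma (n + s + 1)) ~[atTop] fun n => n ! * (n : ℝ) ^ s := by
  have hΓ : Gamma s ≠ 0 := Gamma_ne_zero hs
  have hratio : Tendsto (fun n => Gamma s / GammaSeq s n) atTop (𝓝 1) := by
    simpa only [div_self hΓ, Pi.div_def] using
      (tendsto_const_nhds (x := Gamma s)).div (GammaSeq_tendsto_Gamma s) hΓ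
  refine isEquivalent_iff_exists_eq_mul.mpr ⟨_, hratio, ?_⟩
  filter_upwards [(GammaSeq_tendsto_Gamma s).eventually_ne hΓ] with n hn
  rw [Pi.mul_apply, div_mul_eq_mul_div, ← GammaSeq_mul_Gamma_add_natCast hs,
    mul_div_cancel_left₀ _ hn]
  push_cast
  ring_nf

theorem natCast_add_const_isEquivalent (c : ℝ) :
    (fun n : ℕ => n + c) ~[atTop] fun n => (n : ℝ) :=
  IsEquivalent.refl.add_const_of_norm_tendsto_atTop
    (tendsto_norm_atTop_atTop.comp tendsto_natCast_atTop_atTop)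

theorem Gamma_natCast_add_add_one_isEquivalent (s : ℝ) :
    (fun n : ℕ => Gamma (n + s + 1)) ~[atTop] fun n => n ! * (n : ℝ) ^ s := by
  obtain ⟨N, hN⟩ := exists_nat_gt (-s)
  induction N generalizing s with
  | zero =>
    exact Gamma_natCast_add_add_one_isEquivalent_of_ne
      (ne_neg_natCast_of_pos (by simpa using hN))
  | succ N ih =>
    have hlin := natCast_add_const_isEquivalent (s + 1)
    have hlin_atTop := hlin.symm.tendsto_atTop tendsto_natCast_atTop_atTop
    have hshift := (ih (s + 1) (by push_cast at hN; linarith)).div hlin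
    refine (hshift.congr_left ?_).congr_right ?_
    · filter_upwards [hlin_atTop.eventually_ne_atTop 0] with n hn
      rw [Pi.div_apply, Gamma_add_one hn, mul_div_cancel_left₀ _ hn, add_assoc]
    · filter_upwards [eventually_ne_atTop 0] with n hn
      have hn₀ : (n : ℝ) ≠ 0 := Nat.cast_ne_zero.mpr hn
      rw [Pi.div_apply, rpow_add_one hn₀, ← mul_assoc, mul_div_cancel_right₀ _ hn₀]

theorem Gamma_natCast_add_div_Gamma_natCast_add_isEquivalent (a b : ℝ) :
    (fun n : ℕ => Gamma (n + a) / Gamma (n + b)) ~[atTop] fun n => (n : ℝ) ^ (a - b) := by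
  have hquot := (Gamma_natCast_add_add_one_isEquivalent (a - 1)).div
    (Gamma_natCast_add_add_one_isEquivalent (b - 1))
  simp only [add_assoc, sub_add_cancel] at hquot
  refine hquot.congr_right ?_
  filter_upwards [eventually_gt_atTop 0] with n hn
  rw [Pi.div_apply, mul_div_mul_left _ _ (Nat.cast_ne_zero.mpr n.factorial_ne_zero),
    ← rpow_sub (Nat.cast_pos.mpr hn), sub_sub_sub_cancel_right]

/-- The multiplicity `τ_k`: for the Jacobi parameters `α`, `β` of a compact two-point homogeneous
space, the dimension of the `k`-th eigenspace of the Laplace–Beltrami operator. -/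
noncomputable def eigenspaceDim (α β : ℝ) (k : ℕ) : ℝ :=
  Gamma (β + 1) * (2 * k + α + β + 1) * Gamma (k + α + 1) * Gamma (k + α + β + 1) /
    (Gamma (α + 1) * Gamma (α + β + 2) * Gamma (k + 1) * Gamma (k + β + 1))

/-- The limit of `(∑_{k ≤ m} τ_k) / m ^ (2α + 2)`. -/
noncomputable def leadingDimCoeff (α β : ℝ) : ℝ :=
  Gamma (β + 1) / (Gamma (α + 2) * Gamma (α + β + 2))

/-- The closed form of `∑_{k ≤ m} τ_k`, the dimension of the span `V_m` of the eigenspaces of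
degree at most `m`. -/
noncomputable def degreeSpanDim (α β : ℝ) (m : ℕ) : ℝ :=
  leadingDimCoeff α β *
    (Gamma (m + (α + 2)) / Gamma (m + 1) * (Gamma (m + (α + β + 2)) / Gamma (m + (β + 1))))

theorem degreeSpanDim_isEquivalent (α β : ℝ) :
    degreeSpanDim α β ~[atTop] fun m => leadingDimCoeff α β * (m : ℝ) ^ (2 * α + 2) := by
  have hquots := (Gamma_natCast_add_div_Gamma_natCast_add_isEquivalent (α + 2) 1).mul
    (Gamma_natCast_add_div_Gamma_natCast_add_isEquivalent (α + β + 2) (β + 1))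
  refine (IsEquivalent.refl.mul hquots).congr_right ?_
  filter_upwards [eventually_gt_atTop 0] with m hm
  simp only [Pi.mul_apply]
  rw [← rpow_add (Nat.cast_pos.mpr hm)]
  ring_nf

theorem degreeSpanDim_succ_sub {α β : ℝ} (hα : ∀ k : ℕ, α + 1 ≠ -k) (hβ : ∀ k : ℕ, β + 1 ≠ -k)
    (hαβ : ∀ k : ℕ, α + β + 2 ≠ -k) (k : ℕ) :
    degreeSpanDim α β (k + 1) - degreeSpanDim α β k = eigenspaceDim α β (k + 1) := by
  have hk : (k : ℝ) + 1 ≠ 0 := k.cast_add_one_ne_zero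
  have hα₀ : α + 1 ≠ 0 := by simpa using hα 0
  have hkα : k + (α + 2) ≠ 0 := by
    convert add_natCast_ne_zero hα (k + 1) using 1
    push_cast
    ring
  have hkβ : k + (β + 1) ≠ 0 := add_comm (β + 1) k ▸ add_natCast_ne_zero hβ k
  have hkαβ : k + (α + β + 2) ≠ 0 := add_comm (α + β + 2) k ▸ add_natCast_ne_zero hαβ k
  have hΓα : Gamma (α + 2) = (α + 1) * Gamma (α + 1) := by
    rw [← Gamma_add_one hα₀]
    ring_nf
  have hτ : eigenspaceDim α β (k + 1) =
      Gamma (β + 1) * (2 * k + α + β + 3) * Gamma (k + (α + 2)) * Gamma (k + (α + β + 2)) /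
        (Gamma (α + 1) * Gamma (α + β + 2) * Gamma (k + 1 + 1) * Gamma (k + (β + 1) + 1)) := by
    rw [eigenspaceDim]
    push_cast
    ring_nf
  rw [hτ, degreeSpanDim, degreeSpanDim, leadingDimCoeff, Nat.cast_add_one]
  simp only [add_right_comm (k : ℝ) 1]
  rw [hΓα, Gamma_add_one hk, Gamma_add_one hkα, Gamma_add_one hkβ, Gamma_add_one hkαβ]
  field_simp
  ring

-- If `α + β + 1 = 0`, the factor `(α + β + 1) * Gamma (α + β + 1)` of `τ_0` is `0 * Gamma 0 = 0`
-- instead of `Gamma (α + β + 2) = 1`, so the difference of the initial terms can be nonzero.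
theorem sum_eigenspaceDim {α β : ℝ} (hα : ∀ k : ℕ, α + 1 ≠ -k) (hβ : ∀ k : ℕ, β + 1 ≠ -k)
    (hαβ : ∀ k : ℕ, α + β + 2 ≠ -k) (m : ℕ) :
    ∑ k ∈ range (m + 1), eigenspaceDim α β k =
      degreeSpanDim α β m + (eigenspaceDim α β 0 - degreeSpanDim α β 0) := by
  simp only [sum_range_succ', ← degreeSpanDim_succ_sub hα hβ hαβ, sum_range_sub]
  ring

theorem dim_Vm_strong_equivalence_general {α β : ℝ} (hα : -1 < α) (hβ : ∀ k : ℕ, β + 1 ≠ -k)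
    (hαβ : ∀ k : ℕ, α + β + 2 ≠ -k) :
    Tendsto
      (fun m : ℕ => (∑ k ∈ range (m + 1), eigenspaceDim α β k) /
        (leadingDimCoeff α β * (m : ℝ) ^ (2 * α + 2)))
      atTop (𝓝 1) := by
  have hα₁ : ∀ k : ℕ, α + 1 ≠ -k := ne_neg_natCast_of_pos (by linarith)
  have hcoeff : leadingDimCoeff α β ≠ 0 :=
    div_ne_zero (Gamma_ne_zero hβ)
      (mul_ne_zero (Gamma_pos_of_pos (by linarith)).ne' (Gamma_ne_zero hαβ))
  have hpow : Tendsto (fun m : ℕ => (m : ℝ) ^ (2 * α + 2)) atTop atTop :=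
    (tendsto_rpow_atTop (by linarith)).comp tendsto_natCast_atTop_atTop
  have hnorm : Tendsto (fun m : ℕ => ‖leadingDimCoeff α β * (m : ℝ) ^ (2 * α + 2)‖)
      atTop atTop := by
    simpa only [norm_mul, Function.comp_apply] using
      (tendsto_norm_atTop_atTop.comp hpow).const_mul_atTop (norm_pos_iff.mpr hcoeff)
  have hsum := (degreeSpanDim_isEquivalent α β).add_const_of_norm_tendsto_atTop
    (c := eigenspaceDim α β 0 - degreeSpanDim α β 0) hnorm
  simp only [← sum_eigenspaceDim hα₁ hβ hαβ] at hsum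
  exact (isEquivalent_iff_tendsto_one
    ((hpow.eventually_ne_atTop 0).mono fun _ => mul_ne_zero hcoeff)).mp hsum

theorem dim_Vm_strong_equivalence (α β : ℝ) (hα : -1 < α) (hβ : -1 < β)
    (τ : ℕ → ℝ)
    (hτ : ∀ k : ℕ, τ k =
      Real.Gamma (β + 1) * (2 * (k : ℝ) + α + β + 1) * Real.Gamma ((k : ℝ) + α + 1) *
        Real.Gamma ((k : ℝ) + α + β + 1) /
        (Real.Gamma (α + 1) * Real.Gamma (α + β + 2) * Real.Gamma ((k : ℝ) + 1) *
          Real.Gamma ((k : ℝ) + β + 1))) :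
    Filter.Tendsto
      (fun m : ℕ =>
        (∑ k ∈ Finset.range (m + 1), τ k) /
          ((Real.Gamma (β + 1) / (Real.Gamma (α + 2) * Real.Gamma (α + β + 2))) *
            (m : ℝ) ^ (2 * α + 2)))
      Filter.atTop (nhds 1) := by
  obtain rfl : τ = eigenspaceDim α β := funext hτ
  exact dim_Vm_strong_equivalence_general hα (ne_neg_natCast_of_pos (by linarith))
    (ne_neg_natCast_of_pos (by linarith))
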